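/- Let C be a quasicategory, B a simplicial set, and D: B → C a map of simplicial sets (a diagram in C indexed by B). Then the overcategory C_{/D}, whose n-simplices are the maps Δ[n] ⋆ B → C restricting to D on B, is a quasicategory. -/

import Mathlib

open CategoryTheory Opposite

namespace SSetPaper

universe u

/-- `Vec A k` is the type of "`k`-vertex simplices" of `A`: a point if `k = 0`, and the
`(k-1)`-simplices of `A` otherwise. -/
def Vec (A : SSet.{u}) : ℕ → Type u
  | 0 => PUnit
  | m + 1 => A.obj (op (SimplexCategory.mk m))

/-- Functoriality of `Vec` in the simplicial set. -/
def VecMap {A A' : SSet.{u}} (g : A ⟶ A') : ∀ (k : ℕ), Vec A k → Vec A' k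
  | 0, _ => PUnit.unit
  | m + 1, α => g.app (op (SimplexCategory.mk m)) α

/-- Functoriality of `Vec` in the number of vertices: a monotone map `Fin j → Fin k`
induces a restriction map `Vec A k → Vec A j`. -/
def VecMapHom (A : SSet.{u}) : ∀ {j k : ℕ}, (Fin j →o Fin k) → Vec A k → Vec A j
  | 0, _, _, _ => PUnit.unit
  | _ + 1, 0, v, _ => (v 0).elim0
  | _ + 1, _ + 1, v, α => A.map (SimplexCategory.mkHom v).op α

lemma VecMap_id (A : SSet.{u}) : ∀ (k : ℕ) (α : Vec A k), VecMap (𝟙 A) k α = α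
  | 0, PUnit.unit => rfl
  | _ + 1, _ => rfl

lemma VecMap_comp {A A' A'' : SSet.{u}} (g : A ⟶ A') (g' : A' ⟶ A'') :
    ∀ (k : ℕ) (α : Vec A k), VecMap (g ≫ g') k α = VecMap g' k (VecMap g k α)
  | 0, _ => rfl
  | _ + 1, _ => rfl

lemma VecMapHom_vecMap {A A' : SSet.{u}} (g : A ⟶ A') :
    ∀ {j k : ℕ} (v : Fin j →o Fin k) (α : Vec A k),
      VecMapHom A' v (VecMap g k α) = VecMap g j (VecMapHom A v α)
  | 0, _, _, _ => rfl
  | _ + 1, 0, v, _ => (v 0).elim0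
  | _ + 1, _ + 1, v, α => (NatTrans.naturality_apply g (SimplexCategory.mkHom v).op α).symm

/-- The number of vertices of `y` sent by `u : y ⟶ x` into the first `k` vertices
of `x`. -/
def cutIdx {y x : SimplexCategory} (u : y ⟶ x) (k : ℕ) : ℕ :=
  (Finset.univ.filter fun i : Fin (y.len + 1) => (u.toOrderHom i : ℕ) < k).card

lemma cutIdx_le {y x : SimplexCategory} (u : y ⟶ x) (k : ℕ) : cutIdx u k ≤ y.len + 1 := by
  have := Finset.card_filter_le (Finset.univ : Finset (Fin (y.len + 1)))
    (fun i => (u.toOrderHom i : ℕ) < k)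
  simpa [cutIdx] using this

lemma lt_cutIdx_iff {y x : SimplexCategory} (u : y ⟶ x) (k : ℕ) (i : Fin (y.len + 1)) :
    (i : ℕ) < cutIdx u k ↔ (u.toOrderHom i : ℕ) < k := by
  constructor
  · intro h
    by_contra hn
    have hsub : (Finset.univ.filter fun j : Fin (y.len + 1) => (u.toOrderHom j : ℕ) < k)
        ⊆ Finset.Iio i := by
      intro j hj
      rw [Finset.mem_filter] at hj
      rw [Finset.mem_Iio]
      by_contra hji
      push_neg at hji
      have hmono : (u.toOrderHom i : ℕ) ≤ (u.toOrderHom j : ℕ) := u.toOrderHom.monotone hji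
      exact hn (lt_of_le_of_lt hmono hj.2)
    have hcard := Finset.card_le_card hsub
    rw [Fin.card_Iio] at hcard
    unfold cutIdx at h
    omega
  · intro h
    have hsub : Finset.Iic i
        ⊆ Finset.univ.filter fun j : Fin (y.len + 1) => (u.toOrderHom j : ℕ) < k := by
      intro j hj
      rw [Finset.mem_Iic] at hj
      rw [Finset.mem_filter]
      refine ⟨Finset.mem_univ _, ?_⟩
      have hmono : (u.toOrderHom j : ℕ) ≤ (u.toOrderHom i : ℕ) := u.toOrderHom.monotone hj
      omega
    have hcard := Finset.card_le_card hsub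
    rw [Fin.card_Iic] at hcard
    unfold cutIdx
    omega

/-- The restriction monotone map on the initial part induced by `u : y ⟶ x`. -/
def cutA {y x : SimplexCategory} (u : y ⟶ x) (k : ℕ) : Fin (cutIdx u k) →o Fin k where
  toFun i := ⟨(u.toOrderHom ⟨(i : ℕ), lt_of_lt_of_le i.isLt (cutIdx_le u k)⟩ : ℕ),
    (lt_cutIdx_iff u k _).mp i.isLt⟩
  monotone' i i' h := by
    have : (u.toOrderHom ⟨(i : ℕ), lt_of_lt_of_le i.isLt (cutIdx_le u k)⟩ : ℕ)
        ≤ (u.toOrderHom ⟨(i' : ℕ), lt_of_lt_of_le i'.isLt (cutIdx_le u k)⟩ : ℕ) :=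
      u.toOrderHom.monotone h
    exact this

/-- The restriction monotone map on the final part induced by `u : y ⟶ x`. -/
def cutB {y x : SimplexCategory} (u : y ⟶ x) (k : ℕ) :
    Fin (y.len + 1 - cutIdx u k) →o Fin (x.len + 1 - k) where
  toFun j :=
    ⟨(u.toOrderHom ⟨(j : ℕ) + cutIdx u k, by
        have h1 := j.isLt
        have h2 := cutIdx_le u k
        omega⟩ : ℕ) - k, by
      have h1 : ¬ ((j : ℕ) + cutIdx u k < cutIdx u k) := by omega
      have h2 : ¬ ((u.toOrderHom ⟨(j : ℕ) + cutIdx u k, by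
          have := j.isLt; have := cutIdx_le u k; omega⟩ : ℕ) < k) :=
        fun hh => h1 ((lt_cutIdx_iff u k _).mpr hh)
      have h3 := (u.toOrderHom ⟨(j : ℕ) + cutIdx u k, by
          have := j.isLt; have := cutIdx_le u k; omega⟩).isLt
      omega⟩
  monotone' j j' h := by
    have hmono : (u.toOrderHom ⟨(j : ℕ) + cutIdx u k, by
          have := j.isLt; have := cutIdx_le u k; omega⟩ : ℕ)
        ≤ (u.toOrderHom ⟨(j' : ℕ) + cutIdx u k, by
          have := j'.isLt; have := cutIdx_le u k; omega⟩ : ℕ) := by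
      refine u.toOrderHom.monotone ?_
      show (j : ℕ) + cutIdx u k ≤ (j' : ℕ) + cutIdx u k
      have : (j : ℕ) ≤ (j' : ℕ) := h
      omega
    exact Nat.sub_le_sub_right hmono k


lemma vecMapHom_congr_heq {A : SSet.{u}} {j j' k k' : ℕ} (hj : j = j') (hk : k = k')
    (v : Fin j →o Fin k) (v' : Fin j' →o Fin k')
    (hv : ∀ (i : ℕ) (h1 : i < j) (h2 : i < j'), (v ⟨i, h1⟩ : ℕ) = (v' ⟨i, h2⟩ : ℕ))
    {α : Vec A k} {α' : Vec A k'} (hα : HEq α α') :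
    HEq (VecMapHom A v α) (VecMapHom A v' α') := by
  subst hj; subst hk
  obtain rfl : α = α' := eq_of_heq hα
  obtain rfl : v = v' := by
    apply OrderHom.ext
    funext i
    exact Fin.ext (hv i i.isLt i.isLt)
  rfl

lemma vecMapHom_id_heq {A : SSet.{u}} {j k : ℕ} (hjk : j = k) (v : Fin j →o Fin k)
    (hv : ∀ i : Fin j, (v i : ℕ) = i) (α : Vec A k) : HEq (VecMapHom A v α) α := by
  subst hjk
  obtain rfl : v = OrderHom.id := by
    apply OrderHom.ext
    funext i
    exact Fin.ext (hv i)
  refine heq_of_eq ?_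
  cases j with
  | zero =>
      exact Subsingleton.elim (α := PUnit) _ _
  | succ m =>
      show A.map (SimplexCategory.mkHom OrderHom.id).op α = α
      rw [show SimplexCategory.mkHom (OrderHom.id : Fin (m+1) →o Fin (m+1))
          = 𝟙 (SimplexCategory.mk m) from rfl, op_id]
      exact ConcreteCategory.congr_hom (A.map_id (op (SimplexCategory.mk m))) α

lemma vecMapHom_trans {A : SSet.{u}} : ∀ {j k l : ℕ} (v : Fin j →o Fin k) (w : Fin k →o Fin l)
    (α : Vec A l), VecMapHom A (w.comp v) α = VecMapHom A v (VecMapHom A w α)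
  | 0, _, _, _, _, _ => rfl
  | _ + 1, 0, _, v, _, _ => (v 0).elim0
  | _ + 1, _ + 1, 0, _, w, _ => (w 0).elim0
  | j + 1, k + 1, l + 1, v, w, α => by
      show A.map (SimplexCategory.mkHom (w.comp v)).op α = _
      rw [show SimplexCategory.mkHom (w.comp v)
          = SimplexCategory.mkHom v ≫ SimplexCategory.mkHom w from rfl, op_comp]
      exact ConcreteCategory.congr_hom
        (A.map_comp (SimplexCategory.mkHom w).op (SimplexCategory.mkHom v).op) α

lemma cutIdx_id {x : SimplexCategory} (k : ℕ) (hk : k ≤ x.len + 1) : cutIdx (𝟙 x) k = k := by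
  have hle := cutIdx_le (𝟙 x) k
  by_contra hne
  rcases Nat.lt_or_ge (cutIdx (𝟙 x) k) k with h | h
  · have hcc : cutIdx (𝟙 x) k < cutIdx (𝟙 x) k :=
      (lt_cutIdx_iff (𝟙 x) k ⟨cutIdx (𝟙 x) k, by omega⟩).mpr h
    omega
  · have hklt : k < x.len + 1 := by omega
    have hkk : k < k :=
      (lt_cutIdx_iff (𝟙 x) k ⟨k, hklt⟩).mp (show k < cutIdx (𝟙 x) k by omega)
    omega

lemma nat_eq_of_lt_iff {c1 c2 N : ℕ} (h1 : c1 ≤ N) (h2 : c2 ≤ N)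
    (h : ∀ i < N, (i < c1 ↔ i < c2)) : c1 = c2 := by
  rcases Nat.lt_trichotomy c1 c2 with hlt | he | hlt
  · have := (h c1 (by omega)).mpr hlt
    omega
  · exact he
  · have := (h c2 (by omega)).mp hlt
    omega

lemma cutIdx_comp {z y x : SimplexCategory} (v : z ⟶ y) (u : y ⟶ x) (k : ℕ) :
    cutIdx (v ≫ u) k = cutIdx v (cutIdx u k) := by
  refine nat_eq_of_lt_iff (N := z.len + 1) (cutIdx_le _ _) (cutIdx_le _ _) ?_
  intro i hi
  have e1 := lt_cutIdx_iff (v ≫ u) k ⟨i, hi⟩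
  have e2 := lt_cutIdx_iff u k (v.toOrderHom ⟨i, hi⟩)
  have e3 := lt_cutIdx_iff v (cutIdx u k) ⟨i, hi⟩
  constructor
  · intro h
    have ha1 : ((v ≫ u).toOrderHom ⟨i, hi⟩ : ℕ) < k := e1.mp h
    have ha2 : ((v.toOrderHom ⟨i, hi⟩ : ℕ)) < cutIdx u k := e2.mpr ha1
    exact e3.mpr ha2
  · intro h
    exact e1.mpr (e2.mp (e3.mp h))

lemma join_simplex_ext {A B : SSet.{u}} {n : ℕ}
    {p q : Σ k : Fin (n + 2), Vec A (k : ℕ) × Vec B (n + 1 - (k : ℕ))}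
    (h1 : (p.1 : ℕ) = (q.1 : ℕ)) (h2 : HEq p.2.1 q.2.1) (h3 : HEq p.2.2 q.2.2) : p = q := by
  obtain ⟨⟨k, hk⟩, α, β⟩ := p
  obtain ⟨⟨k', hk'⟩, α', β'⟩ := q
  dsimp only at h1 h2 h3
  subst h1
  obtain rfl : α = α' := eq_of_heq h2
  obtain rfl : β = β' := eq_of_heq h3
  rfl


lemma cutB_apply {y x : SimplexCategory} (u : y ⟶ x) (K : ℕ) (j : Fin (y.len + 1 - cutIdx u K)) :
    ((cutB u K) j : ℕ)
      = (u.toOrderHom ⟨(j : ℕ) + cutIdx u K,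
          by have := j.isLt; have := cutIdx_le u K; omega⟩ : ℕ) - K := rfl

lemma vec_punit_heq {A : SSet.{u}} {j : ℕ} (h : j = 0) (w : Vec A 0) (z : Vec A j) :
    HEq w z := by
  subst h
  exact heq_of_eq (Subsingleton.elim (α := PUnit) _ _)

lemma orderHom_val_congr {N M : ℕ} (w : Fin N →o Fin M) {p q : Fin N} (h : (p : ℕ) = q) :
    (w p : ℕ) = w q :=
  congrArg (fun z => (w z : ℕ)) (Fin.ext h)

lemma cutB_comp_val {z y x : SimplexCategory} (v : z ⟶ y) (u : y ⟶ x) (K : ℕ) (i : ℕ)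
    (h1 : i < z.len + 1 - cutIdx (v ≫ u) K)
    (h2 : i < z.len + 1 - cutIdx v (cutIdx u K)) :
    ((cutB (v ≫ u) K) ⟨i, h1⟩ : ℕ)
      = (((cutB u K).comp (cutB v (cutIdx u K))) ⟨i, h2⟩ : ℕ) := by
  have hC := cutIdx_comp v u K
  have pfA1 : i + cutIdx (v ≫ u) K < z.len + 1 := by
    have := cutIdx_le (v ≫ u) K; omega
  have pfA2 : i + cutIdx v (cutIdx u K) < z.len + 1 := by
    have := cutIdx_le v (cutIdx u K); omega
  have pfin := (v.toOrderHom ⟨i + cutIdx v (cutIdx u K), pfA2⟩).isLt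
  have hnotlt : ¬ ((v.toOrderHom ⟨i + cutIdx v (cutIdx u K), pfA2⟩ : ℕ) < cutIdx u K) := by
    intro hh
    have hcon : i + cutIdx v (cutIdx u K) < cutIdx v (cutIdx u K) :=
      (lt_cutIdx_iff v (cutIdx u K) _).mpr hh
    omega
  have pfB : ((v.toOrderHom ⟨i + cutIdx v (cutIdx u K), pfA2⟩ : ℕ) - cutIdx u K)
      + cutIdx u K < y.len + 1 := by omega
  calc ((cutB (v ≫ u) K) ⟨i, h1⟩ : ℕ)
      = ((v ≫ u).toOrderHom ⟨i + cutIdx (v ≫ u) K, pfA1⟩ : ℕ) - K := rfl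
    _ = ((v ≫ u).toOrderHom ⟨i + cutIdx v (cutIdx u K), pfA2⟩ : ℕ) - K :=
        congrArg (fun t => t - K)
          (orderHom_val_congr ((v ≫ u).toOrderHom)
            (p := ⟨i + cutIdx (v ≫ u) K, pfA1⟩)
            (q := ⟨i + cutIdx v (cutIdx u K), pfA2⟩)
            (show i + cutIdx (v ≫ u) K = i + cutIdx v (cutIdx u K) by omega))
    _ = (u.toOrderHom (v.toOrderHom ⟨i + cutIdx v (cutIdx u K), pfA2⟩) : ℕ) - K := rfl
    _ = (u.toOrderHom ⟨((v.toOrderHom ⟨i + cutIdx v (cutIdx u K), pfA2⟩ : ℕ) - cutIdx u K)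
          + cutIdx u K, pfB⟩ : ℕ) - K :=
        congrArg (fun t => t - K)
          (orderHom_val_congr (u.toOrderHom)
            (p := v.toOrderHom ⟨i + cutIdx v (cutIdx u K), pfA2⟩)
            (q := ⟨((v.toOrderHom ⟨i + cutIdx v (cutIdx u K), pfA2⟩ : ℕ) - cutIdx u K)
              + cutIdx u K, pfB⟩)
            (show (v.toOrderHom ⟨i + cutIdx v (cutIdx u K), pfA2⟩ : ℕ)
                = ((v.toOrderHom ⟨i + cutIdx v (cutIdx u K), pfA2⟩ : ℕ) - cutIdx u K)
                  + cutIdx u K by omega))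
    _ = (((cutB u K).comp (cutB v (cutIdx u K))) ⟨i, h2⟩ : ℕ) := rfl

/-- The join `A ⋆ B` of two simplicial sets.  An `n`-simplex is a decomposition of
`{0, …, n}` into an initial segment with `k` vertices and a final segment with `n+1-k`
vertices, together with a simplex of `A` on the initial segment and a simplex of `B` on
the final segment (one of which may be empty). -/
def Join (A B : SSet.{u}) : SSet.{u} where
  obj a := Σ k : Fin (a.unop.len + 2), Vec A (k : ℕ) × Vec B (a.unop.len + 1 - (k : ℕ))
  map {a b} f := TypeCat.ofHom fun p =>
    ⟨⟨cutIdx f.unop (p.1 : ℕ), by have := cutIdx_le f.unop (p.1 : ℕ); omega⟩,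
      VecMapHom A (cutA f.unop (p.1 : ℕ)) p.2.1,
      VecMapHom B (cutB f.unop (p.1 : ℕ)) p.2.2⟩
  map_id a := by
    refine ConcreteCategory.hom_ext _ _ fun p => ?_
    obtain ⟨k, α, β⟩ := p
    refine join_simplex_ext ?_ ?_ ?_
    · exact cutIdx_id (k : ℕ) (by have := k.isLt; omega)
    · exact vecMapHom_id_heq (cutIdx_id (k : ℕ) (by have := k.isLt; omega)) _ (fun _ => rfl) α
    · refine vecMapHom_id_heq ?_ _ ?_ β
      · show a.unop.len + 1 - cutIdx (𝟙 a.unop) (k : ℕ) = a.unop.len + 1 - (k : ℕ)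
        have h1 := cutIdx_id (x := a.unop) (k : ℕ) (by have := k.isLt; omega)
        omega
      · intro j
        show ((j : ℕ) + cutIdx (𝟙 a.unop) (k : ℕ)) - (k : ℕ) = (j : ℕ)
        have h1 := cutIdx_id (x := a.unop) (k : ℕ) (by have := k.isLt; omega)
        have h2 := j.isLt
        omega
  map_comp {a b c} f g := by
    refine ConcreteCategory.hom_ext _ _ fun p => ?_
    obtain ⟨k, α, β⟩ := p
    refine join_simplex_ext ?_ ?_ ?_
    · exact cutIdx_comp g.unop f.unop (k : ℕ)
    · refine HEq.trans (vecMapHom_congr_heq (cutIdx_comp g.unop f.unop (k : ℕ)) rfl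
        (cutA ((f ≫ g).unop) (k : ℕ))
        ((cutA f.unop (k : ℕ)).comp (cutA g.unop (cutIdx f.unop (k : ℕ))))
        (fun _ _ _ => rfl) HEq.rfl) (heq_of_eq (vecMapHom_trans _ _ _))
    · refine HEq.trans (vecMapHom_congr_heq ?_ rfl
        (cutB ((f ≫ g).unop) (k : ℕ))
        ((cutB f.unop (k : ℕ)).comp (cutB g.unop (cutIdx f.unop (k : ℕ))))
        ?_ HEq.rfl) (heq_of_eq (vecMapHom_trans _ _ _))
      · have hC := cutIdx_comp g.unop f.unop (k : ℕ)
        show c.unop.len + 1 - cutIdx (g.unop ≫ f.unop) (k : ℕ)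
            = c.unop.len + 1 - cutIdx g.unop (cutIdx f.unop (k : ℕ))
        omega
      · intro i hh1 hh2
        exact cutB_comp_val g.unop f.unop (k : ℕ) i hh1 hh2

/-- The join construction is functorial in the first argument. -/
def joinMapL {A A' : SSet.{u}} (g : A ⟶ A') (B : SSet.{u}) : Join A B ⟶ Join A' B where
  app a := TypeCat.ofHom fun p => ⟨p.1, VecMap g (p.1 : ℕ) p.2.1, p.2.2⟩
  naturality a b f := by
    refine ConcreteCategory.hom_ext _ _ fun p => ?_
    exact congrArg
      (fun z => (⟨⟨cutIdx f.unop (p.1 : ℕ), by have := cutIdx_le f.unop (p.1 : ℕ); omega⟩, z,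
        VecMapHom B (cutB f.unop (p.1 : ℕ)) p.2.2⟩ :
          Σ k : Fin (b.unop.len + 2), Vec A' (k : ℕ) × Vec B (b.unop.len + 1 - (k : ℕ))))
      (VecMapHom_vecMap g (cutA f.unop (p.1 : ℕ)) p.2.1) |>.symm

/-- The inclusion `B ⟶ A ⋆ B` of the second factor of a join. -/
def joinInclR (A B : SSet.{u}) : B ⟶ Join A B where
  app a := TypeCat.ofHom fun β => ⟨⟨0, by omega⟩, PUnit.unit, β⟩
  naturality a b f := by
    refine ConcreteCategory.hom_ext _ _ fun β => ?_
    have hc : cutIdx f.unop 0 = 0 := by simp [cutIdx]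
    refine join_simplex_ext hc.symm (vec_punit_heq hc _ _) ?_
    show HEq (VecMapHom B (SimplexCategory.Hom.toOrderHom f.unop) β)
      (VecMapHom B (cutB f.unop 0) β)
    refine vecMapHom_congr_heq (by omega) rfl _ _ ?_ HEq.rfl
    intro i h1 h2
    have pf1 : i + cutIdx f.unop 0 < b.unop.len + 1 := by
      have := cutIdx_le f.unop 0; omega
    calc ((SimplexCategory.Hom.toOrderHom f.unop) ⟨i, h1⟩ : ℕ)
        = ((SimplexCategory.Hom.toOrderHom f.unop) ⟨i + cutIdx f.unop 0, pf1⟩ : ℕ) :=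
          orderHom_val_congr _ (show (i : ℕ) = i + cutIdx f.unop 0 by omega)
      _ = ((SimplexCategory.Hom.toOrderHom f.unop) ⟨i + cutIdx f.unop 0, pf1⟩ : ℕ) - 0 := by
          omega
      _ = ((cutB f.unop 0) ⟨i, h2⟩ : ℕ) := rfl

lemma joinInclR_joinMapL {A A' B : SSet.{u}} (g : A ⟶ A') :
    joinInclR A B ≫ joinMapL g B = joinInclR A' B := by
  apply NatTrans.ext
  funext a
  refine ConcreteCategory.hom_ext _ _ fun β => ?_
  rfl

lemma joinMapL_id (A B : SSet.{u}) : joinMapL (𝟙 A) B = 𝟙 (Join A B) := by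
  apply NatTrans.ext
  funext a
  refine ConcreteCategory.hom_ext _ _ fun p => ?_
  show (⟨p.1, VecMap (𝟙 A) (p.1 : ℕ) p.2.1, p.2.2⟩ :
      Σ k : Fin (a.unop.len + 2), Vec A (k : ℕ) × Vec B (a.unop.len + 1 - (k : ℕ))) = p
  obtain ⟨k, α, β⟩ := p
  rw [VecMap_id]

lemma joinMapL_comp {A A' A'' : SSet.{u}} (g : A ⟶ A') (g' : A' ⟶ A'') (B : SSet.{u}) :
    joinMapL (g ≫ g') B = joinMapL g B ≫ joinMapL g' B := by
  apply NatTrans.ext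
  funext a
  refine ConcreteCategory.hom_ext _ _ fun p => ?_
  show (⟨p.1, VecMap (g ≫ g') (p.1 : ℕ) p.2.1, p.2.2⟩ :
      Σ k : Fin (a.unop.len + 2), Vec A'' (k : ℕ) × Vec B (a.unop.len + 1 - (k : ℕ)))
    = ⟨p.1, VecMap g' _ (VecMap g (p.1 : ℕ) p.2.1), p.2.2⟩
  rw [VecMap_comp]

/-- The overcategory `C_{/D}` of a diagram `D : B ⟶ C`: its `n`-simplices are the maps of
simplicial sets `Δ[n] ⋆ B ⟶ C` whose restriction along `B ⊆ Δ[n] ⋆ B` is `D`. -/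
def Overcategory (C B : SSet.{u}) (D : B ⟶ C) : SSet.{u} where
  obj a := { F : Join (SSet.stdSimplex.obj a.unop) B ⟶ C //
      joinInclR (SSet.stdSimplex.obj a.unop) B ≫ F = D }
  map {a b} f := TypeCat.ofHom fun F => ⟨joinMapL (SSet.stdSimplex.map f.unop) B ≫ F.1, by
    rw [← Category.assoc, joinInclR_joinMapL, F.2]⟩
  map_id a := by
    refine ConcreteCategory.hom_ext _ _ fun F => ?_
    apply Subtype.ext
    show joinMapL (SSet.stdSimplex.map (𝟙 a).unop) B ≫ F.1 = F.1
    rw [unop_id, show SSet.stdSimplex.map (𝟙 a.unop) = 𝟙 (SSet.stdSimplex.obj a.unop) from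
      CategoryTheory.Functor.map_id _ _, joinMapL_id, Category.id_comp]
  map_comp {a b c} f g := by
    refine ConcreteCategory.hom_ext _ _ fun F => ?_
    apply Subtype.ext
    show joinMapL (SSet.stdSimplex.map (f ≫ g).unop) B ≫ F.1
        = joinMapL (SSet.stdSimplex.map g.unop) B ≫
            joinMapL (SSet.stdSimplex.map f.unop) B ≫ F.1
    rw [unop_comp, show SSet.stdSimplex.map (g.unop ≫ f.unop)
        = SSet.stdSimplex.map g.unop ≫ SSet.stdSimplex.map f.unop from
      CategoryTheory.Functor.map_comp _ _ _, joinMapL_comp, Category.assoc]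

end SSetPaper


namespace SSetPaper

open Simplicial
universe u

lemma vecMapHom_id {A : SSet.{u}} {k : ℕ} (v : Fin k →o Fin k) (hv : ∀ i, (v i : ℕ) = i)
    (α : Vec A k) : VecMapHom A v α = α :=
  eq_of_heq (vecMapHom_id_heq rfl v hv α)

/-- The cast order isomorphism between equal finite ordinals. -/
def finCast {m m' : ℕ} (h : m = m') : Fin m →o Fin m' where
  toFun i := ⟨i, h ▸ i.isLt⟩
  monotone' _ _ hij := hij

/-- The simplex of a join given by a pair. -/
def mkJoin {A B : SSet.{u}} {N : ℕ} (k m : ℕ) (h : k + m = N + 1) (α : Vec A k) (β : Vec B m) :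
    (Join A B).obj (op ⦋N⦌) :=
  ⟨⟨k, by dsimp; omega⟩, α, VecMapHom B (finCast (by dsimp; omega)) β⟩

lemma exists_mkJoin {A B : SSet.{u}} {N : ℕ} (p : (Join A B).obj (op ⦋N⦌)) :
    ∃ (k m : ℕ) (h : k + m = N + 1) (α : Vec A k) (β : Vec B m), p = mkJoin k m h α β := by
  obtain ⟨k, α, β⟩ := p
  have hk : (k : ℕ) ≤ N + 1 := by have := k.isLt; dsimp at this; omega
  refine ⟨k, N + 1 - k, by omega, α, β, ?_⟩
  refine join_simplex_ext rfl HEq.rfl (heq_of_eq ?_)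
  exact (vecMapHom_id _ (fun _ => rfl) β).symm

lemma mkJoin_eq_fst {A B : SSet.{u}} {N : ℕ} {k m k' m' : ℕ} {h : k + m = N + 1}
    {h' : k' + m' = N + 1} {α : Vec A k} {β : Vec B m} {α' : Vec A k'} {β' : Vec B m'}
    (e : mkJoin k m h α β = mkJoin k' m' h' α' β') : k = k' :=
  congrArg (fun z : (Join A B).obj (op ⦋N⦌) => (z.1 : ℕ)) e

lemma mkJoin_inj {A B : SSet.{u}} {N : ℕ} {k m : ℕ} {h : k + m = N + 1}
    {h' : k + m = N + 1} {α : Vec A k} {β : Vec B m} {α' : Vec A k} {β' : Vec B m}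
    (e : mkJoin k m h α β = mkJoin k m h' α' β') : α = α' ∧ β = β' := by
  obtain rfl : m = N + 1 - k := by omega
  have e1 := eq_of_heq (Sigma.mk.inj e).2
  have e2 := Prod.mk.inj e1
  refine ⟨e2.1, ?_⟩
  have e3 := e2.2
  erw [vecMapHom_id _ (fun _ => rfl), vecMapHom_id _ (fun _ => rfl)] at e3
  exact e3

/-- `u` is the ordinal sum of `u1` and `u2`. -/
structure IsSum {M N k k' m m' : ℕ} (u : ⦋M⦌ ⟶ ⦋N⦌) (u1 : Fin k' →o Fin k)
    (u2 : Fin m' →o Fin m) : Prop where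
  h1 : ∀ (i : ℕ) (hi : i < k') (hi' : i < M + 1),
    (u.toOrderHom ⟨i, hi'⟩ : ℕ) = u1 ⟨i, hi⟩
  h2 : ∀ (i : ℕ) (hi : i < m') (hi' : k' + i < M + 1),
    (u.toOrderHom ⟨k' + i, hi'⟩ : ℕ) = k + u2 ⟨i, hi⟩

lemma exists_isSum {M N k m : ℕ} (u : ⦋M⦌ ⟶ ⦋N⦌) (h : k + m = N + 1) :
    ∃ (k' m' : ℕ) (_ : k' + m' = M + 1) (u1 : Fin k' →o Fin k) (u2 : Fin m' →o Fin m),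
      IsSum u u1 u2 := by
  have hle := cutIdx_le u k
  dsimp at hle
  refine ⟨cutIdx u k, M + 1 - cutIdx u k, by omega, cutA u k,
    (finCast (by dsimp; omega)).comp (cutB u k), ⟨fun _ _ _ => rfl, fun i hi hi' => ?_⟩⟩
  change _ = k + ((u.toOrderHom ⟨i + cutIdx u k, _⟩ : ℕ) - k)
  have h3 := lt_cutIdx_iff u k ⟨cutIdx u k + i, hi'⟩
  have e : (u.toOrderHom ⟨i + cutIdx u k, by dsimp; omega⟩ : ℕ) =
      u.toOrderHom ⟨cutIdx u k + i, hi'⟩ :=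
    orderHom_val_congr _ (by dsimp; omega)
  rw [e]
  have h4 : ¬ (cutIdx u k + i < cutIdx u k) := by omega
  have h5 : ¬ ((u.toOrderHom ⟨cutIdx u k + i, hi'⟩ : ℕ) < k) := fun hh => h4 (h3.mpr hh)
  omega

lemma exists_sum {M N k k' m m' : ℕ} (h : k + m = N + 1) (h' : k' + m' = M + 1)
    (u1 : Fin k' →o Fin k) (u2 : Fin m' →o Fin m) :
    ∃ u : ⦋M⦌ ⟶ ⦋N⦌, IsSum u u1 u2 := by
  refine ⟨SimplexCategory.mkHom ⟨fun i => if hi : (i : ℕ) < k' then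
    ⟨u1 ⟨i, hi⟩, by have := (u1 ⟨i, hi⟩).isLt; omega⟩ else
    ⟨k + u2 ⟨i - k', by omega⟩, by have := (u2 ⟨i - k', by omega⟩).isLt; omega⟩, ?_⟩, ?_, ?_⟩
  · intro a b hab
    have hab' : (a : ℕ) ≤ b := hab
    dsimp only
    split_ifs with h1 h2 h2
    · exact u1.monotone (show (⟨a, h1⟩ : Fin k') ≤ ⟨b, h2⟩ from hab)
    · change (u1 _ : ℕ) ≤ k + _
      have := (u1 ⟨a, h1⟩).isLt
      omega
    · omega
    · change k + (u2 _ : ℕ) ≤ k + (u2 _ : ℕ)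
      have : (u2 ⟨a - k', by omega⟩ : ℕ) ≤ u2 ⟨b - k', by omega⟩ :=
        u2.monotone (show (a : ℕ) - k' ≤ b - k' by omega)
      omega
  · intro i hi hi'
    change ((if hi : i < k' then _ else _ : Fin (N+1)) : ℕ) = _
    rw [dif_pos hi]
  · intro i hi hi'
    change ((if hi : k' + i < k' then _ else _ : Fin (N+1)) : ℕ) = _
    rw [dif_neg (by omega)]
    change k + (u2 _ : ℕ) = _
    congr 1
    exact orderHom_val_congr _ (by dsimp; omega)

lemma map_mkJoin {A B : SSet.{u}} {M N k k' m m' : ℕ} (h : k + m = N + 1) (h' : k' + m' = M + 1)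
    {u : ⦋M⦌ ⟶ ⦋N⦌} {u1 : Fin k' →o Fin k} {u2 : Fin m' →o Fin m} (hu : IsSum u u1 u2)
    (α : Vec A k) (β : Vec B m) :
    (Join A B).map u.op (mkJoin k m h α β) =
      mkJoin k' m' h' (VecMapHom A u1 α) (VecMapHom B u2 β) := by
  have hc : cutIdx u k = k' := by
    refine nat_eq_of_lt_iff (N := M + 1) (cutIdx_le _ _) (by omega) ?_
    intro i hi
    refine (lt_cutIdx_iff u k ⟨i, hi⟩).trans ?_
    by_cases hik : i < k'
    · have := hu.h1 i hik hi
      have h3 := (u1 ⟨i, hik⟩).isLt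
      simp only [hik, iff_true]
      omega
    · obtain ⟨j, rfl⟩ := Nat.exists_eq_add_of_le (not_lt.mp hik)
      have := hu.h2 j (by omega) hi
      simp only [hik, iff_false]
      omega
  refine join_simplex_ext hc ?_ ?_
  · refine vecMapHom_congr_heq hc rfl _ _ (fun i h1 h2 => ?_) HEq.rfl
    exact hu.h1 i h2 (by omega)
  · refine HEq.trans (heq_of_eq (vecMapHom_trans _ _ _).symm)
      (HEq.trans ?_ (heq_of_eq (vecMapHom_trans _ _ _)))
    refine vecMapHom_congr_heq ?_ rfl _ _ (fun i h1 h2 => ?_) HEq.rfl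
    · change M + 1 - cutIdx u k = M + 1 - k'
      rw [hc]
    · have h2' : i < M + 1 - k' := h2
      change (u.toOrderHom ⟨i + cutIdx u k, _⟩ : ℕ) - k = u2 ⟨i, _⟩
      have e : (u.toOrderHom ⟨i + cutIdx u k, by dsimp; omega⟩ : ℕ) =
          u.toOrderHom ⟨k' + i, by dsimp; omega⟩ :=
        orderHom_val_congr _ (by dsimp; omega)
      have := hu.h2 i (by omega) (by omega)
      rw [e, this]
      omega

@[simp]
lemma joinMapL_mkJoin {A A' B : SSet.{u}} (g : A ⟶ A') {N k m : ℕ} (h : k + m = N + 1)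
    (α : Vec A k) (β : Vec B m) :
    (joinMapL g B).app (op ⦋N⦌) (mkJoin k m h α β) = mkJoin k m h (VecMap g k α) β := rfl

lemma joinInclR_mkJoin {A B : SSet.{u}} {N : ℕ} (β : B.obj (op ⦋N⦌)) :
    (joinInclR A B).app (op ⦋N⦌) β = mkJoin 0 (N + 1) (by omega) PUnit.unit β := by
  refine join_simplex_ext rfl HEq.rfl (heq_of_eq ?_)
  exact (vecMapHom_id (A := B) (k := N + 1) _ (fun _ => rfl) β).symm

end SSetPaper


namespace SSetPaper

open Simplicial
universe u

/-- The tautological simplex of the standard simplex. -/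
def idΔ (k : ℕ) : Vec (Δ[k] : SSet.{u}) (k + 1) :=
  SSet.stdSimplex.objEquiv.symm (𝟙 ⦋k⦌)

/-- The map underlying the image of a simplex under a map to the overcategory. -/
def ov {C B K : SSet.{u}} {D : B ⟶ C} (σ : K ⟶ Overcategory C B D) {d : ℕ}
    (x : K.obj (op ⦋d⦌)) : Join Δ[d] B ⟶ C := (σ.app (op ⦋d⦌) x).1

lemma ov_incl {C B K : SSet.{u}} {D : B ⟶ C} (σ : K ⟶ Overcategory C B D) {d : ℕ}
    (x : K.obj (op ⦋d⦌)) : joinInclR Δ[d] B ≫ ov σ x = D := (σ.app (op ⦋d⦌) x).2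

lemma ov_mkJoin_zero {C B K : SSet.{u}} {D : B ⟶ C} (σ : K ⟶ Overcategory C B D) {d N : ℕ}
    (x : K.obj (op ⦋d⦌)) (h : 0 + (N + 1) = N + 1) (α : Vec Δ[d] 0) (β : Vec B (N + 1)) :
    (ov σ x).app (op ⦋N⦌) (mkJoin 0 (N + 1) h α β) = VecMap D (N + 1) β := by
  have e2 := ConcreteCategory.congr_hom (NatTrans.congr_app (ov_incl σ x) (op ⦋N⦌)) β
  refine Eq.trans ?_ e2
  exact congrArg ((ov σ x).app (op ⦋N⦌)) (joinInclR_mkJoin β).symm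

lemma ov_map {C B K : SSet.{u}} {D : B ⟶ C} (σ : K ⟶ Overcategory C B D) {d e : ℕ}
    (x : K.obj (op ⦋d⦌)) (f : ⦋e⦌ ⟶ ⦋d⦌) :
    ov σ (K.map f.op x : K.obj (op ⦋e⦌)) = joinMapL (SSet.stdSimplex.map f) B ≫ ov σ x := by
  have h := NatTrans.naturality_apply σ f.op x
  exact congrArg Subtype.val h

/-- Auxiliary function: the map `K ⋆ B ⟶ C` induced by a map `K ⟶ C_{/D}`. -/
def glueFun {C B K : SSet.{u}} (D : B ⟶ C) (σ : K ⟶ Overcategory C B D) (N : ℕ) :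
    ∀ (k m : ℕ) (_ : k + m = N + 1) (_ : Vec K k) (_ : Vec B m), C.obj (op ⦋N⦌) := fun k =>
  match k with
  | 0 => fun _ h _ β => VecMap D (N + 1) (VecMapHom B (finCast (by omega)) β)
  | k + 1 => fun m h α β => (ov σ (d := k) α).app (op ⦋N⦌) (mkJoin (k + 1) m h (idΔ k) β)

lemma stdMap_idΔ {k d : ℕ} (f : ⦋k⦌ ⟶ ⦋d⦌) :
    VecMap (SSet.stdSimplex.map f) (k + 1) (idΔ.{u} k) = SSet.stdSimplex.objEquiv.symm f := by
  apply SSet.stdSimplex.objEquiv.injective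
  rw [Equiv.apply_symm_apply]
  exact Category.id_comp f

lemma vecMapHom_idΔ {k d : ℕ} (f : ⦋k⦌ ⟶ ⦋d⦌) :
    VecMapHom (Δ[d] : SSet.{u}) (j := k + 1) (k := d + 1) f.toOrderHom (idΔ.{u} d) =
      SSet.stdSimplex.objEquiv.symm f := by
  apply SSet.stdSimplex.objEquiv.injective
  rw [Equiv.apply_symm_apply]
  exact Category.comp_id f

lemma glue_naturality {C B K : SSet.{u}} (D : B ⟶ C) (σ : K ⟶ Overcategory C B D)
    {M N k k' m m' : ℕ} (h : k + m = N + 1) (h' : k' + m' = M + 1)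
    {u : ⦋M⦌ ⟶ ⦋N⦌} {u1 : Fin k' →o Fin k} {u2 : Fin m' →o Fin m} (hu : IsSum u u1 u2)
    (α : Vec K k) (β : Vec B m) :
    C.map u.op (glueFun D σ N k m h α β) =
      glueFun D σ M k' m' h' (VecMapHom K u1 α) (VecMapHom B u2 β) := by
  cases k' with
  | zero =>
    obtain rfl : m' = M + 1 := by omega
    have hR : glueFun D σ M 0 (M + 1) h' (VecMapHom K u1 α) (VecMapHom B u2 β) =
        VecMap D (M + 1) (VecMapHom B u2 β) := by
      change VecMap D (M + 1) _ = _
      rw [vecMapHom_id]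
      exact fun _ => rfl
    rw [hR]
    cases k with
    | zero =>
      obtain rfl : m = N + 1 := by omega
      change VecMapHom C u.toOrderHom (VecMap D (N + 1) (VecMapHom B _ β)) = _
      rw [vecMapHom_id _ (fun _ => rfl), VecMapHom_vecMap]
      have e : u.toOrderHom = u2 := by
        apply OrderHom.ext
        funext i
        apply Fin.ext
        have hi : (i : ℕ) < M + 1 := i.isLt
        have h3 := hu.h2 i hi (by omega)
        have h4 : (u.toOrderHom i : ℕ) = u.toOrderHom ⟨0 + i, by dsimp; omega⟩ :=
          orderHom_val_congr _ (by simp)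
        have h5 : 0 + (u2 ⟨i, hi⟩ : ℕ) = u2 i := by
          rw [Nat.zero_add]
        exact h4.trans (h3.trans h5)
      rw [← e]
    | succ k =>
      change C.map u.op ((ov σ (d := k) α).app (op ⦋N⦌) (mkJoin (k + 1) m h (idΔ k) β)) = _
      rw [← NatTrans.naturality_apply, map_mkJoin h h' hu]
      exact ov_mkJoin_zero σ (d := k) α _ _ _
  | succ k' =>
    cases k with
    | zero => exact (u1 0).elim0
    | succ k =>
      change C.map u.op ((ov σ (d := k) α).app (op ⦋N⦌) (mkJoin (k + 1) m h (idΔ k) β)) =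
        (ov σ (d := k') (K.map (SimplexCategory.mkHom u1).op α)).app (op ⦋M⦌)
          (mkJoin (k' + 1) m' h' (idΔ k') _)
      rw [← NatTrans.naturality_apply, map_mkJoin h h' hu]
      refine Eq.trans ?_ (ConcreteCategory.congr_hom (NatTrans.congr_app
        (ov_map σ (d := k) (e := k') α (SimplexCategory.mkHom u1)).symm (op ⦋M⦌)) _)
      refine congrArg ((ov σ (d := k) α).app (op ⦋M⦌)) ?_
      refine Eq.trans ?_ (joinMapL_mkJoin _ _ _ _).symm
      refine congrArg (fun z => mkJoin (k' + 1) m' h' z _) ?_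
      exact (vecMapHom_idΔ (SimplexCategory.mkHom u1)).trans
        (stdMap_idΔ (SimplexCategory.mkHom u1)).symm

/-- The map `K ⋆ B ⟶ C` induced by a map `K ⟶ C_{/D}`. -/
def glue {C B K : SSet.{u}} (D : B ⟶ C) (σ : K ⟶ Overcategory C B D) : Join K B ⟶ C where
  app a := TypeCat.ofHom fun p => glueFun D σ a.unop.len p.1 (a.unop.len + 1 - p.1)
    (by have := p.1.isLt; omega) p.2.1 p.2.2
  naturality a b f := by
    refine ConcreteCategory.hom_ext _ _ fun p => ?_
    obtain ⟨k, α, β⟩ := p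
    have hs : IsSum (M := b.unop.len) (N := a.unop.len) f.unop (cutA f.unop k) (cutB f.unop k) := by
      refine ⟨fun _ _ _ => rfl, fun i hi hi' => ?_⟩
      change _ = k + ((f.unop.toOrderHom ⟨i + cutIdx f.unop k, _⟩ : ℕ) - k)
      have h3 := lt_cutIdx_iff f.unop k ⟨cutIdx f.unop k + i, hi'⟩
      have e : (f.unop.toOrderHom ⟨i + cutIdx f.unop k, by omega⟩ : ℕ) =
          f.unop.toOrderHom ⟨cutIdx f.unop k + i, hi'⟩ :=
        orderHom_val_congr _ (by dsimp; omega)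
      rw [e]
      have h4 : ¬ (cutIdx f.unop k + i < cutIdx f.unop k) := by omega
      have h5 : ¬ ((f.unop.toOrderHom ⟨cutIdx f.unop k + i, hi'⟩ : ℕ) < k) :=
        fun hh => h4 (h3.mpr hh)
      change (f.unop.toOrderHom ⟨cutIdx f.unop k + i, hi'⟩ : ℕ) = _
      omega
    exact (glue_naturality D σ (M := b.unop.len) (N := a.unop.len)
      (by have := k.isLt; omega) (by have := cutIdx_le f.unop k; omega) hs α β).symm

lemma glue_mkJoin {C B K : SSet.{u}} (D : B ⟶ C) (σ : K ⟶ Overcategory C B D) {N k m : ℕ}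
    (h : k + m = N + 1) (α : Vec K k) (β : Vec B m) :
    (glue D σ).app (op ⦋N⦌) (mkJoin k m h α β) = glueFun D σ N k m h α β := by
  obtain rfl : m = N + 1 - k := by omega
  change glueFun D σ N k (N + 1 - k) _ α (VecMapHom B _ β) = _
  rw [vecMapHom_id _ (fun _ => rfl)]

lemma joinHom_ext {A B C : SSet.{u}} {f g : Join A B ⟶ C}
    (h : ∀ (N k m : ℕ) (h : k + m = N + 1) (α : Vec A k) (β : Vec B m),
      f.app (op ⦋N⦌) (mkJoin k m h α β) = g.app (op ⦋N⦌) (mkJoin k m h α β)) : f = g := by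
  apply NatTrans.ext
  funext a
  refine ConcreteCategory.hom_ext _ _ fun p => ?_
  obtain ⟨k, m, h', α, β, rfl⟩ := exists_mkJoin (N := a.unop.len) p
  exact h _ _ _ _ _ _

lemma incl_glue {C B K : SSet.{u}} (D : B ⟶ C) (σ : K ⟶ Overcategory C B D) :
    joinInclR K B ≫ glue D σ = D := by
  apply NatTrans.ext
  funext a
  refine ConcreteCategory.hom_ext _ _ fun β => ?_
  change (glue D σ).app (op ⦋a.unop.len⦌) ((joinInclR K B).app (op ⦋a.unop.len⦌) β) = _
  refine (congrArg ((glue D σ).app (op ⦋a.unop.len⦌)) (joinInclR_mkJoin β)).trans ?_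
  refine (glue_mkJoin D σ _ _ _).trans ?_
  exact congrArg (VecMap D (a.unop.len + 1))
    (vecMapHom_id (k := a.unop.len + 1) _ (fun _ => rfl) β)

lemma map_glue {C B K : SSet.{u}} (D : B ⟶ C) (σ : K ⟶ Overcategory C B D) {d : ℕ}
    (x : K.obj (op ⦋d⦌)) :
    joinMapL (SSet.yonedaEquiv.symm x : Δ[d] ⟶ K) B ≫ glue D σ = ov σ x := by
  apply joinHom_ext
  intro N k m h α β
  rw [NatTrans.comp_app, ConcreteCategory.comp_apply, joinMapL_mkJoin, glue_mkJoin]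
  cases k with
  | zero =>
    obtain rfl : m = N + 1 := by omega
    rw [ov_mkJoin_zero]
    change VecMap D (N + 1) (VecMapHom B _ β) = _
    rw [vecMapHom_id _ (fun _ => rfl)]
  | succ k =>
    obtain ⟨f, rfl⟩ := SSet.stdSimplex.objEquiv.symm.surjective α
    change (ov σ (d := k) (K.map f.op x)).app (op ⦋N⦌) (mkJoin (k + 1) m h (idΔ k) β) = _
    refine (ConcreteCategory.congr_hom (NatTrans.congr_app (ov_map σ x f) (op ⦋N⦌)) _).trans ?_
    refine congrArg ((ov σ x).app (op ⦋N⦌)) ?_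
    refine (joinMapL_mkJoin _ _ _ _).trans ?_
    exact congrArg (fun z => mkJoin (k + 1) m h z _) (stdMap_idΔ f)

end SSetPaper


namespace SSetPaper

open Simplicial
universe u

/-- Nondegeneracy for the (possibly empty) simplices `Vec B m`. -/
def VND {B : SSet.{u}} {m : ℕ} (β : Vec B m) : Prop :=
  ∀ (m' : ℕ) (v : Fin m →o Fin m') (γ : Vec B m'), β = VecMapHom B v γ → m ≤ m'

lemma vnd_succ {B : SSet.{u}} {m : ℕ} (β : B.obj (op ⦋m⦌)) :
    VND (B := B) (m := m + 1) β ↔ β ∈ B.nonDegenerate m := by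
  constructor
  · rintro h ⟨m', hm', f, y, hy⟩
    have := h (m' + 1) f.toOrderHom y hy.symm
    omega
  · intro h m' v γ e
    by_contra hlt
    cases m' with
    | zero => exact (v 0).elim0
    | succ m' =>
      exact h ⟨m', by omega, SimplexCategory.mkHom v, γ, e.symm⟩

lemma mkJoin_nonDegenerate_iff {A B : SSet.{u}} {N k m : ℕ} (h : k + m = N + 1)
    (α : Vec A k) (β : Vec B m) :
    mkJoin k m h α β ∈ (Join A B).nonDegenerate N ↔ VND α ∧ VND β := by
  constructor
  · intro hn
    constructor
    · intro k' v γ e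
      by_contra hlt
      have hk' : k' ≠ 0 := by
        rintro rfl
        exact (v ⟨0, by omega⟩).elim0
      obtain ⟨M, hM⟩ : ∃ M, k' + m = M + 1 := ⟨k' + m - 1, by omega⟩
      obtain ⟨u, hu⟩ := exists_sum hM h v OrderHom.id
      refine hn ⟨M, by omega, u, mkJoin k' m hM γ β, ?_⟩
      rw [map_mkJoin hM h hu, ← e, vecMapHom_id _ (fun _ => rfl)]
    · intro m' v γ e
      by_contra hlt
      have hm' : m' ≠ 0 := by
        rintro rfl
        exact (v ⟨0, by omega⟩).elim0
      obtain ⟨M, hM⟩ : ∃ M, k + m' = M + 1 := ⟨k + m' - 1, by omega⟩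
      obtain ⟨u, hu⟩ := exists_sum hM h OrderHom.id v
      refine hn ⟨M, by omega, u, mkJoin k m' hM α γ, ?_⟩
      rw [map_mkJoin hM h hu, ← e, vecMapHom_id _ (fun _ => rfl)]
  · rintro ⟨hα, hβ⟩ ⟨M, hM, f, y, hy⟩
    obtain ⟨k1, m1, h1, α1, β1, rfl⟩ := exists_mkJoin y
    obtain ⟨k', m', h', u1, u2, hu⟩ := exists_isSum f h1
    rw [map_mkJoin h1 h' hu] at hy
    obtain rfl := mkJoin_eq_fst hy
    obtain rfl : m' = m := by omega
    obtain ⟨e1, e2⟩ := mkJoin_inj hy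
    have := hα _ _ _ e1.symm
    have := hβ _ _ _ e2.symm
    omega

/-- Simplices of the standard simplex, as elements of `Vec`. -/
def stdV {k d : ℕ} (f : ⦋k⦌ ⟶ ⦋d⦌) : Vec (Δ[d] : SSet.{u}) (k + 1) :=
  SSet.stdSimplex.objEquiv.symm f

lemma exists_stdV {k d : ℕ} (α : Vec (Δ[d] : SSet.{u}) (k + 1)) : ∃ f, α = stdV f :=
  ⟨SSet.stdSimplex.objEquiv α, (SSet.stdSimplex.objEquiv.symm_apply_apply α).symm⟩

lemma stdV_inj {k d : ℕ} {f g : ⦋k⦌ ⟶ ⦋d⦌} (h : stdV.{u} f = stdV g) : f = g :=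
  SSet.stdSimplex.objEquiv.symm.injective h

lemma vecMapHom_stdV_id {k d : ℕ} (v : Fin (k + 1) →o Fin (d + 1)) :
    VecMapHom (Δ[d] : SSet.{u}) v (stdV (𝟙 ⦋d⦌)) = stdV (SimplexCategory.mkHom v) :=
  vecMapHom_idΔ (SimplexCategory.mkHom v)

lemma vnd_stdV_iff {k d : ℕ} (f : ⦋k⦌ ⟶ ⦋d⦌) : VND (stdV.{u} f) ↔ Mono f :=
  (vnd_succ _).trans (SSet.stdSimplex.objEquiv_symm_mem_nonDegenerate_iff_mono f)

lemma orderHom_eq_id {m : ℕ} (v : Fin m →o Fin m) (hv : Function.Injective v) (i : Fin m) :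
    (v i : ℕ) = i := by
  have h1 : StrictMono v := v.monotone.strictMono_of_injective hv
  have h2 : (v : Fin m → Fin m) = id := by
    refine (h1.range_inj strictMono_id).1 ?_
    rw [Set.range_id]
    exact (Finite.injective_iff_surjective.1 hv).range_eq
  rw [h2]
  rfl

lemma IsSum.injective_right {M N k k' m m' : ℕ} {u : ⦋M⦌ ⟶ ⦋N⦌} {u1 : Fin k' →o Fin k}
    {u2 : Fin m' →o Fin m} (h' : k' + m' = M + 1) (hu : IsSum u u1 u2)
    (hi : Function.Injective u.toOrderHom) : Function.Injective u2 := by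
  intro a b hab
  have ha := hu.h2 a a.isLt (by have := a.isLt; omega)
  have hb := hu.h2 b b.isLt (by have := b.isLt; omega)
  have : (⟨k' + a, by have := a.isLt; omega⟩ : Fin (M + 1)) =
      ⟨k' + b, by have := b.isLt; omega⟩ := by
    apply hi
    apply Fin.ext
    rw [ha, hb]
    simp [hab]
  have h3 : k' + (a : ℕ) = k' + b := congrArg Fin.val this
  apply Fin.ext
  omega

lemma isSum_δ {n m N : ℕ} (h : n + 1 + m = N + 1) (i : Fin (n + 2)) :
    IsSum (SimplexCategory.δ (n := N) ⟨i, by have := i.isLt; omega⟩) (k' := n + 1) (k := n + 2)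
      (SimplexCategory.δ i).toOrderHom (OrderHom.id : Fin m →o Fin m) := by
  refine ⟨fun a ha ha' => ?_, fun a ha ha' => ?_⟩
  · change ((Fin.succAbove (n := N + 1) ⟨i, _⟩ ⟨a, ha'⟩ : Fin (N + 2)) : ℕ) =
      (Fin.succAbove i ⟨a, ha⟩ : Fin (n + 2))
    simp only [Fin.succAbove, Fin.lt_def, Fin.val_castSucc]
    split_ifs <;> simp
  · change ((Fin.succAbove (n := N + 1) ⟨i, _⟩ ⟨n + 1 + a, ha'⟩ : Fin (N + 2)) : ℕ) =
      n + 2 + a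
    have := i.isLt
    simp only [Fin.succAbove, Fin.lt_def, Fin.val_castSucc]
    rw [if_neg (by omega)]
    simp
    omega

lemma mkJoin_mem_range_iff {K A B : SSet.{u}} (g : K ⟶ A) {N k m : ℕ} (h : k + m = N + 1)
    (α : Vec A k) (β : Vec B m) :
    mkJoin k m h α β ∈ (SSet.Subcomplex.range (joinMapL g B)).obj (op ⦋N⦌) ↔
      ∃ α', VecMap g k α' = α := by
  constructor
  · rintro ⟨p, hp⟩
    obtain ⟨k1, m1, h1, α1, β1, rfl⟩ := exists_mkJoin p
    rw [joinMapL_mkJoin] at hp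
    obtain rfl := mkJoin_eq_fst hp
    obtain rfl : m1 = m := by omega
    exact ⟨α1, (mkJoin_inj hp).1⟩
  · rintro ⟨α', rfl⟩
    exact ⟨mkJoin k m h α' β, rfl⟩

lemma mkJoin_mem_range_horn_iff {B : SSet.{u}} {n : ℕ} (i : Fin (n + 1)) {N k m : ℕ}
    (h : k + 1 + m = N + 1) (f : ⦋k⦌ ⟶ ⦋n⦌) (β : Vec B m) :
    mkJoin (k + 1) m h (stdV f) β ∈
        (SSet.Subcomplex.range (joinMapL (Λ[n, i].ι : _ ⟶ (Δ[n] : SSet.{u})) B)).obj (op ⦋N⦌) ↔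
      ∃ j, j ≠ i ∧ ∀ x, f.toOrderHom x ≠ j := by
  refine (mkJoin_mem_range_iff _ _ _ _).trans ?_
  have : (∃ α', VecMap (Λ[n, i].ι : _ ⟶ (Δ[n] : SSet.{u})) (k + 1) α' =
      stdV f) ↔
      Set.range f.toOrderHom ∪ {i} ≠ Set.univ := by
    constructor
    · rintro ⟨α', h⟩
      have := α'.2
      change α'.1 = _ at h
      rw [h] at this
      exact this
    · intro h
      exact ⟨⟨_, h⟩, rfl⟩
  rw [this, Set.ne_univ_iff_exists_notMem]
  refine exists_congr fun j => ?_
  simp only [Set.mem_union, Set.mem_range, Set.mem_singleton_iff, not_or, not_exists]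
  tauto

lemma mk_mkJoin_inj {A B : SSet.{u}} {N N' k m m' : ℕ} {h : k + m = N + 1} {h' : k + m' = N' + 1}
    {α : Vec A k} {β : Vec B m} {α' : Vec A k} {β' : Vec B m'}
    (e : SSet.S.mk (X := Join A B) (mkJoin k m h α β) = SSet.S.mk (mkJoin k m' h' α' β')) :
    m = m' ∧ HEq β β' := by
  obtain rfl : N = N' := SSet.S.dim_eq_of_mk_eq e
  obtain rfl : m = m' := by omega
  rw [SSet.S.ext_iff] at e
  exact ⟨rfl, heq_of_eq (mkJoin_inj e).2⟩

lemma mk_mkJoin_fst {A B : SSet.{u}} {N N' k k' m m' : ℕ} {h : k + m = N + 1}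
    {h' : k' + m' = N' + 1}
    {α : Vec A k} {β : Vec B m} {α' : Vec A k'} {β' : Vec B m'}
    (e : SSet.S.mk (X := Join A B) (mkJoin k m h α β) = SSet.S.mk (mkJoin k' m' h' α' β')) :
    k = k' := by
  obtain rfl : N = N' := SSet.S.dim_eq_of_mk_eq e
  rw [SSet.S.ext_iff] at e
  exact mkJoin_eq_fst e

end SSetPaper


namespace SSetPaper

open Simplicial
universe u

lemma δ_mkJoin {B : SSet.{u}} {n m : ℕ} (i : Fin (n + 3)) (β : Vec B m) :
    (Join (Δ[n + 2] : SSet.{u}) B).δ (n := n + 1 + m) ⟨i, by have := i.isLt; omega⟩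
      (mkJoin (n + 3) m (by omega) (stdV (𝟙 ⦋n + 2⦌)) β) =
    mkJoin (n + 2) m (by omega) (stdV (SimplexCategory.δ i)) β := by
  refine (map_mkJoin (by omega) (by omega) (isSum_δ (n := n + 1) (m := m) (N := n + 1 + m)
    (by omega) i) _ _).trans ?_
  rw [vecMapHom_id _ (fun _ => rfl)]
  exact congrArg (fun z => mkJoin (n + 2) m _ z β) (vecMapHom_stdV_id _)

lemma std_cases {n k : ℕ} (i : Fin (n + 3)) (f : ⦋k⦌ ⟶ ⦋n + 2⦌) [Mono f]
    (h : ∀ j, j ≠ i → ∃ x, f.toOrderHom x = j) :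
    (∃ hk : k = n + 2, f = eqToHom (by rw [hk])) ∨
      (∃ hk : k = n + 1, f = eqToHom (by rw [hk]) ≫ SimplexCategory.δ i) := by
  have hle : k ≤ n + 2 := SimplexCategory.len_le_of_mono f
  have hge : n + 1 ≤ k := by
    have h1 : (Finset.univ.erase i) ⊆ Finset.univ.image f.toOrderHom := by
      intro j hj
      obtain ⟨x, hx⟩ := h j (Finset.ne_of_mem_erase hj)
      exact Finset.mem_image.2 ⟨x, Finset.mem_univ _, hx⟩
    have h2 := Finset.card_le_card h1
    have h3 := Finset.card_image_le (s := Finset.univ) (f := f.toOrderHom)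
    rw [Finset.card_erase_of_mem (Finset.mem_univ _)] at h2
    simp only [Finset.card_univ, Fintype.card_fin, SimplexCategory.len_mk] at h2 h3
    omega
  obtain rfl | rfl : k = n + 2 ∨ k = n + 1 := by omega
  · left
    exact ⟨rfl, SimplexCategory.eq_id_of_mono f⟩
  · right
    refine ⟨rfl, ?_⟩
    obtain ⟨j, rfl⟩ := SimplexCategory.eq_δ_of_mono f
    by_cases hj : j = i
    · subst hj; simp
    · obtain ⟨x, hx⟩ := h j hj
      exact absurd hx (Fin.succAbove_ne j x)

/-- The pairing (in the sense of Moss) showing that `Λ[n + 2, i] ⋆ B ⟶ Δ[n + 2] ⋆ B` is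
inner anodyne. -/
def pc (B : SSet.{u}) {n : ℕ} (i : Fin (n + 3)) :
    (SSet.Subcomplex.range
      (joinMapL (Λ[n + 2, i].ι : _ ⟶ (Δ[n + 2] : SSet.{u})) B)).PairingCore where
  ι := Σ m, { β : Vec B m // VND β }
  dim s := n + 1 + s.1
  simplex s := mkJoin (n + 3) s.1 (by omega) (stdV (𝟙 ⦋n + 2⦌)) s.2.1
  index s := ⟨i, by have := i.isLt; omega⟩
  nonDegenerate₁ s := (mkJoin_nonDegenerate_iff _ _ _).2
    ⟨(vnd_stdV_iff _).2 inferInstance, s.2.2⟩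
  nonDegenerate₂ s := by
    rw [δ_mkJoin]
    exact (mkJoin_nonDegenerate_iff _ _ _).2 ⟨(vnd_stdV_iff _).2 inferInstance, s.2.2⟩
  notMem₁ s h := by
    obtain ⟨j, _, hj⟩ := (mkJoin_mem_range_horn_iff i _ _ _).1 h
    exact hj j rfl
  notMem₂ s h := by
    rw [δ_mkJoin] at h
    obtain ⟨j, hji, hj⟩ := (mkJoin_mem_range_horn_iff i _ _ _).1 h
    obtain ⟨z, hz⟩ := Fin.exists_succAbove_eq hji
    exact hj z hz
  injective_type₁' {s t} h := by
    obtain ⟨m, β, hβ⟩ := s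
    obtain ⟨m', β', hβ'⟩ := t
    obtain ⟨h1, h2⟩ := mk_mkJoin_inj h
    dsimp only at h1 h2
    subst h1
    obtain rfl := eq_of_heq h2
    rfl
  injective_type₂' {s t} h := by
    obtain ⟨m, β, hβ⟩ := s
    obtain ⟨m', β', hβ'⟩ := t
    rw [δ_mkJoin, δ_mkJoin] at h
    obtain ⟨h1, h2⟩ := mk_mkJoin_inj h
    dsimp only at h1 h2
    subst h1
    obtain rfl := eq_of_heq h2
    rfl
  type₁_ne_type₂' s t h := by
    rw [δ_mkJoin] at h
    have := mk_mkJoin_fst h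
    omega
  surjective' x := by
    obtain ⟨N, p, hp, hp', rfl⟩ := x.mk_surjective
    obtain ⟨k, m, h, α, β, rfl⟩ := exists_mkJoin p
    obtain ⟨hα, hβ⟩ := (mkJoin_nonDegenerate_iff _ _ _).1 hp
    cases k with
    | zero =>
      refine absurd ((mkJoin_mem_range_iff _ _ _ _).2 ?_) hp'
      exact ⟨(PUnit.unit : PUnit.{u + 1}), rfl⟩
    | succ k =>
      obtain ⟨f, rfl⟩ := exists_stdV α
      have : Mono f := (vnd_stdV_iff _).1 hα
      have hf : ∀ j, j ≠ i → ∃ x, f.toOrderHom x = j := by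
        intro j hj
        by_contra hcon
        push Not at hcon
        exact hp' ((mkJoin_mem_range_horn_iff i _ _ _).2 ⟨j, hj, hcon⟩)
      refine ⟨⟨m, β, hβ⟩, ?_⟩
      obtain ⟨rfl, rfl⟩ | ⟨rfl, rfl⟩ := std_cases i f hf
      · left
        obtain rfl : N = n + 1 + m + 1 := by omega
        rfl
      · right
        obtain rfl : N = n + 1 + m := by omega
        rw [δ_mkJoin]
        simp only [eqToHom_refl, Category.id_comp]
        rfl

lemma pc_type₂ (B : SSet.{u}) {n : ℕ} (i : Fin (n + 3)) (s : (pc B i).ι) :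
    ((pc B i).type₂ s).toS = SSet.S.mk (X := Join (Δ[n + 2] : SSet.{u}) B) (dim := n + 1 + s.1)
      (mkJoin (n + 2) s.1 (by omega) (stdV (SimplexCategory.δ i)) s.2.1) :=
  congrArg (fun z => SSet.S.mk (X := Join (Δ[n + 2] : SSet.{u}) B) z) (δ_mkJoin i s.2.1)

instance (B : SSet.{u}) {n : ℕ} (i : Fin (n + 3)) : (pc B i).IsProper where
  isUniquelyCodimOneFace s := by
    refine (SSet.S.IsUniquelyCodimOneFace.iff _ _).2 ⟨_, rfl, ?_⟩
    intro j hj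
    have hj2 : (Join (Δ[n + 2] : SSet.{u}) B).map (SimplexCategory.δ (n := n + 1 + s.1) j).op
      (mkJoin (n + 3) s.1 (by omega) (stdV (𝟙 ⦋n + 2⦌)) s.2.1) =
      mkJoin (n + 2) s.1 (by omega) (stdV (SimplexCategory.δ i)) s.2.1 := hj.trans (δ_mkJoin _ _)
    have h0 : n + 3 + s.1 = n + 1 + s.1 + 1 + 1 := by omega
    obtain ⟨k', m', h', u1, u2, hu⟩ := exists_isSum (SimplexCategory.δ (n := n + 1 + s.1) j) h0
    have hj3 := (map_mkJoin h0 h' hu (stdV (𝟙 ⦋n + 2⦌)) s.2.1).symm.trans hj2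
    obtain rfl := mkJoin_eq_fst hj3
    obtain rfl : m' = s.1 := by omega
    have e1 := stdV_inj ((vecMapHom_stdV_id (k := n + 1) (d := n + 2) u1).symm.trans
      (mkJoin_inj hj3).1)
    by_contra hne
    obtain ⟨z, hz⟩ := Fin.exists_succAbove_eq (Ne.symm hne)
    have hz' : (Fin.succAbove j z : ℕ) = i := congrArg Fin.val hz
    by_cases hzk : (z : ℕ) < n + 2
    · have h3 := hu.h1 z hzk z.isLt
      have h4 : (u1 ⟨z, hzk⟩ : ℕ) = Fin.succAbove i ⟨z, hzk⟩ :=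
        congrArg (fun w : ⦋n + 1⦌ ⟶ ⦋n + 2⦌ => (w.toOrderHom ⟨z, hzk⟩ : ℕ)) e1
      exact Fin.succAbove_ne i ⟨z, hzk⟩ (Fin.ext (h4.symm.trans (h3.symm.trans hz')))
    · obtain ⟨w, hw⟩ := Nat.exists_eq_add_of_le (not_lt.1 hzk)
      have hzl : (z : ℕ) < n + 1 + s.1 + 1 := z.isLt
      have h3 := hu.h2 w (by omega) (by omega)
      have h4 : (Fin.succAbove j z : ℕ) = (SimplexCategory.δ (n := n + 1 + s.1) j).toOrderHom
        ⟨n + 2 + w, by dsimp; omega⟩ := orderHom_val_congr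
          (SimplexCategory.δ (n := n + 1 + s.1) j).toOrderHom hw
      have := i.isLt
      omega

instance (B : SSet.{u}) {n : ℕ} (i : Fin (n + 3)) : (pc B i).IsRegular where
  wf := by
    refine Subrelation.wf (r := InvImage (· < ·) (fun s : (pc B i).ι => s.1)) ?_
      (InvImage.wf _ Nat.lt_wfRel.wf)
    intro s t hst
    change s.1 < t.1
    have hle : ((pc B i).type₂ s).toN ≤ ((pc B i).type₁ t).toN := hst.2.le
    obtain ⟨f, hf, hf2⟩ := SSet.N.le_iff_exists_mono.1 hle
    change ⦋n + 1 + s.1⦌ ⟶ ⦋n + 1 + t.1 + 1⦌ at f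
    have hf3 : (Join (Δ[n + 2] : SSet.{u}) B).map f.op
      (mkJoin (n + 3) t.1 (by omega) (stdV (𝟙 ⦋n + 2⦌)) t.2.1) =
      mkJoin (n + 2) s.1 (by omega) (stdV (SimplexCategory.δ i)) s.2.1 :=
        hf2.trans (δ_mkJoin _ _)
    have h0 : n + 3 + t.1 = n + 1 + t.1 + 1 + 1 := by omega
    obtain ⟨k', m', h', u1, u2, hu⟩ := exists_isSum f h0
    rw [map_mkJoin h0 h' hu] at hf3
    obtain rfl := mkJoin_eq_fst hf3
    obtain rfl : m' = s.1 := by omega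
    have e := (mkJoin_inj hf3).2
    have h1 : s.1 ≤ t.1 := s.2.2 _ _ _ e.symm
    refine lt_of_le_of_ne h1 fun heq => hst.1 ?_
    have hinj := hu.injective_right h' (SimplexCategory.mono_iff_injective.1 hf)
    obtain ⟨m, β, hβ⟩ := s
    obtain ⟨m', β', hβ'⟩ := t
    dsimp only at heq u2 e hinj
    subst heq
    rw [vecMapHom_id u2 (orderHom_eq_id u2 hinj)] at e
    subst e
    rfl

lemma pc_isInner (B : SSet.{u}) {n : ℕ} (i : Fin (n + 3)) (h0 : 0 < i) (hn : i < Fin.last _) :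
    (pc B i).IsInner where
  ne_zero s h := by
    have h1 : (i : ℕ) = 0 := congrArg Fin.val h
    have h2 : 0 < (i : ℕ) := h0
    omega
  ne_last s h := by
    have h1 : (i : ℕ) = n + 1 + s.1 + 1 := congrArg Fin.val h
    have h2 : (i : ℕ) < n + 2 := hn
    omega

lemma vecMap_injective {A A' : SSet.{u}} (g : A ⟶ A') [Mono g] (k : ℕ) :
    Function.Injective (VecMap g k) := by
  cases k with
  | zero => exact fun _ _ _ => rfl
  | succ k =>
    exact (mono_iff_injective (g.app (op ⦋k⦌))).1 inferInstance

instance {A A' : SSet.{u}} (g : A ⟶ A') [Mono g] (B : SSet.{u}) : Mono (joinMapL g B) := by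
  rw [NatTrans.mono_iff_mono_app]
  intro a
  rw [mono_iff_injective]
  intro p q hpq
  obtain ⟨k, m, h, α, β, rfl⟩ := exists_mkJoin (N := a.unop.len) p
  obtain ⟨k', m', h', α', β', rfl⟩ := exists_mkJoin (N := a.unop.len) q
  have hpq' : mkJoin (N := a.unop.len) k m h (VecMap g k α) β = mkJoin k' m' h' (VecMap g k' α') β' := hpq
  obtain rfl := mkJoin_eq_fst hpq'
  obtain rfl : m = m' := by omega
  obtain ⟨e1, rfl⟩ := mkJoin_inj hpq'
  obtain rfl := vecMap_injective g k e1
  rfl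

lemma innerAnodyne_join (B : SSet.{u}) {n : ℕ} (i : Fin (n + 3)) (h0 : 0 < i)
    (hn : i < Fin.last _) :
    SSet.innerAnodyneExtensions
      (joinMapL (Λ[n + 2, i].ι : _ ⟶ (Δ[n + 2] : SSet.{u})) B) := by
  apply SSet.strongInnerAnodyneExtensions_le_innerAnodyneExtensions
  have := pc_isInner B i h0 hn
  exact ⟨inferInstance, (pc B i).pairing, inferInstance, inferInstance⟩

end SSetPaper


namespace SSetPaper

open Simplicial
universe u

lemma exists_lift (C B : SSet.{u}) [SSet.Quasicategory C] {n : ℕ} (i : Fin (n + 3)) (h0 : 0 < i)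
    (hn : i < Fin.last _) (G : Join (Λ[n + 2, i] : SSet.{u}) B ⟶ C) :
    ∃ F : Join (Δ[n + 2] : SSet.{u}) B ⟶ C, joinMapL Λ[n + 2, i].ι B ≫ F = G := by
  have := innerAnodyne_join B i h0 hn _
    (SSet.mem_innerFibrations (Limits.terminal.from C))
  have sq : CommSq G (joinMapL Λ[n + 2, i].ι B) (Limits.terminal.from C)
      (Limits.terminal.from _) := ⟨Subsingleton.elim _ _⟩
  exact ⟨sq.lift, sq.fac_left⟩

lemma ov_ext {C B K : SSet.{u}} {D : B ⟶ C} {σ τ : K ⟶ Overcategory C B D}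
    (h : ∀ (d : ℕ) (x : K.obj (op ⦋d⦌)), ov σ x = ov τ x) : σ = τ := by
  apply NatTrans.ext
  funext a
  refine ConcreteCategory.hom_ext _ _ fun x => ?_
  exact Subtype.ext (h a.unop.len x)

lemma overcategory_aux (C B : SSet.{u}) [SSet.Quasicategory C] (D : B ⟶ C) {n : ℕ}
    (i : Fin (n + 3)) (h0 : 0 < i) (hn : i < Fin.last _)
    (σ₀ : (Λ[n + 2, i] : SSet.{u}) ⟶ Overcategory C B D) :
    ∃ σ : (Δ[n + 2] : SSet.{u}) ⟶ Overcategory C B D, σ₀ = Λ[n + 2, i].ι ≫ σ := by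
  obtain ⟨F, hF⟩ := exists_lift C B i h0 hn (glue D σ₀)
  have hFD : joinInclR (Δ[n + 2] : SSet.{u}) B ≫ F = D := by
    rw [← joinInclR_joinMapL (B := B) Λ[n + 2, i].ι, Category.assoc, hF, incl_glue]
  let y : (Overcategory C B D).obj (op ⦋n + 2⦌) := ⟨F, hFD⟩
  refine ⟨SSet.yonedaEquiv.symm y, ov_ext fun d x => ?_⟩
  rw [← map_glue, ← hF, ← Category.assoc, ← joinMapL_comp]
  change _ = joinMapL (SSet.stdSimplex.map (SSet.stdSimplex.objEquiv x.1)) B ≫ F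
  congr 2

end SSetPaper

/-!
STATEMENT 12: Let `C` be a quasicategory, `B` a simplicial set, and `D : B → C` a map of
simplicial sets (a diagram in `C` indexed by `B`).  Then the overcategory `C_{/D}`, whose
`n`-simplices are the maps `Δ[n] ⋆ B → C` restricting to `D` on `B`, is a quasicategory.
-/

open SSetPaper in
theorem overcategory_is_quasicategory
    (C : SSet.{0}) [SSet.Quasicategory C] (B : SSet.{0}) (D : B ⟶ C) :
    SSet.Quasicategory (Overcategory C B D) := by
  exact ⟨fun _ i σ₀ h0 hn => overcategory_aux C B D i h0 hn σ₀⟩
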